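/- arXiv:0909.3402 — 3 statements merged into one kernel-verified Lean document; each statement's English description precedes it below -/
import Mathlib

section
/- Let Γ be a finite group acting on a finite set 𝒮, and let Π ≤ Γ be a subgroup. Let 𝒮_{[Π]} be the (finite) set of pairs (X,Σ) with X ∈ 𝒮 and Σ a subgroup of the stabilizer Γ_X that is conjugate to Π in Γ, and let 𝒞_{[Π]} be the set of such pairs with Σ additionally a proper subgroup of Γ_X. Let N_{[Π]} be the number of orbits of Γ on 𝒮 whose elements have stabilizer conjugate to Π. Then |Π| · |𝒮_{[Π]}| = |Γ| · N_{[Π]} + |Π| · |𝒞_{[Π]}|. -/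
/-!
A pair `(X, Σ)` with `Σ ≤ G_X` conjugate to `P` has either `Σ < G_X` or `Σ = G_X`, and pairs of the
second kind correspond to the points `X` whose stabilizer is conjugate to `P`
(`card_pairs_eq_add`). Those points form a union of orbits, each of size `|G| / |P|` by
orbit-stabilizer, so `|P|` times their number is `|G|` times the number of orbits
(`card_mul_card_conjStab`).
-/

/-- The points of `S` whose stabilizer in `G` is conjugate to `P`. -/
abbrev ConjStab {G : Type*} [Group G] (S : Type*) [MulAction G S] (P : Subgroup G) :=
  {X : S // ∃ g : G, Subgroup.map (MulAut.conj g).toMonoidHom P = MulAction.stabilizer G X}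

theorem card_pairs_eq_add {G : Type*} [Group G] [Finite G] {S : Type*} [Finite S] [MulAction G S]
    (P : Subgroup G) :
    Nat.card {p : S × Subgroup G //
        p.2 ≤ MulAction.stabilizer G p.1 ∧
        ∃ g : G, Subgroup.map (MulAut.conj g).toMonoidHom P = p.2} =
      Nat.card (ConjStab S P) +
      Nat.card {p : S × Subgroup G //
        p.2 < MulAction.stabilizer G p.1 ∧
        ∃ g : G, Subgroup.map (MulAut.conj g).toMonoidHom P = p.2} := by
  rw [← Nat.card_sum]
  symm
  refine Nat.card_congr (Equiv.ofBijective (Sum.elim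
    (fun X => ⟨(X.1, MulAction.stabilizer G X.1), le_rfl, X.2⟩)
    (fun p => ⟨p.1, p.2.1.le, p.2.2⟩)) ⟨?_, ?_⟩)
  · rintro (⟨X, hX⟩ | ⟨⟨X, K⟩, hK, hX⟩) (⟨Y, hY⟩ | ⟨⟨Y, L⟩, hL, hY⟩) h
    · simp only [Sum.elim_inl, Subtype.mk.injEq, Prod.mk.injEq] at h
      simp [h.1]
    · simp only [Sum.elim_inl, Sum.elim_inr, Subtype.mk.injEq, Prod.mk.injEq] at h
      obtain ⟨rfl, rfl⟩ := h
      exact absurd hL (lt_irrefl _)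
    · simp only [Sum.elim_inl, Sum.elim_inr, Subtype.mk.injEq, Prod.mk.injEq] at h
      obtain ⟨rfl, rfl⟩ := h
      exact absurd hK (lt_irrefl _)
    · simp only [Sum.elim_inr, Subtype.mk.injEq, Prod.mk.injEq] at h
      obtain ⟨rfl, rfl⟩ := h
      rfl
  · rintro ⟨⟨X, K⟩, hK, hX⟩
    rcases eq_or_lt_of_le hK with h | h
    · dsimp only at h hX
      subst h
      exact ⟨Sum.inl ⟨X, hX⟩, rfl⟩
    · exact ⟨Sum.inr ⟨(X, K), h, hX⟩, rfl⟩

/-- The fibre over the class of `X` is the full `G`-orbit of `X`, because having stabilizer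
conjugate to `P` is invariant under the action. -/
theorem card_fiber_mul_card {G : Type*} [Group G] [Finite G] {S : Type*} [Finite S]
    [MulAction G S] (P : Subgroup G)
    (q : Quot (fun X Y : ConjStab S P => ∃ g : G, g • X.1 = Y.1)) :
    Nat.card P * Nat.card {Y : ConjStab S P // Quot.mk _ Y = q} = Nat.card G := by
  induction q using Quot.ind with | _ X => ?_
  have hequiv : Equivalence (fun X Y : ConjStab S P => ∃ g : G, g • X.1 = Y.1) :=
    ⟨fun X => ⟨1, one_smul _ _⟩, fun ⟨g, h⟩ => ⟨g⁻¹, by rw [← h, inv_smul_smul]⟩,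
      fun ⟨g, h⟩ ⟨k, h'⟩ => ⟨k * g, by rw [mul_smul, h, h']⟩⟩
  have hfib : Nat.card {Y : ConjStab S P // Quot.mk (fun X Y : ConjStab S P =>
      ∃ g : G, g • X.1 = Y.1) Y = Quot.mk _ X} = Nat.card (MulAction.orbit G X.1) := by
    refine Nat.card_congr (Equiv.ofBijective (fun Y => ⟨Y.1.1, ?_⟩) ⟨?_, ?_⟩)
    · exact hequiv.quot_mk_eq_iff _ _ |>.1 Y.2.symm
    · intro Y Z h
      exact Subtype.ext (Subtype.ext (Subtype.mk.inj h))
    · rintro ⟨_, g, rfl⟩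
      obtain ⟨X, k, hk⟩ := X
      refine ⟨⟨⟨g • X, g * k, ?_⟩, ?_⟩, rfl⟩
      · rw [MulAction.stabilizer_smul_eq_stabilizer_map_conj, ← hk, Subgroup.map_map, map_mul]
        rfl
      · exact (Quot.sound ⟨g, rfl⟩).symm
  have hstab : Nat.card P = Nat.card (MulAction.stabilizer G X.1) := by
    obtain ⟨X, k, hk⟩ := X
    rw [← hk]
    exact Nat.card_congr (P.equivMapOfInjective _ (MulAut.conj k).injective).toEquiv
  rw [hfib, hstab, mul_comm, ← Nat.card_prod]
  exact Nat.card_congr (MulAction.orbitProdStabilizerEquivGroup G X.1)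

theorem card_mul_card_conjStab {G : Type*} [Group G] [Finite G] {S : Type*} [Finite S]
    [MulAction G S] (P : Subgroup G) :
    Nat.card P * Nat.card (ConjStab S P) =
      Nat.card G * Nat.card (Quot (fun X Y : ConjStab S P => ∃ g : G, g • X.1 = Y.1)) := by
  have := Fintype.ofFinite (Quot (fun X Y : ConjStab S P => ∃ g : G, g • X.1 = Y.1))
  rw [← Nat.card_congr (Equiv.sigmaFiberEquiv
    (Quot.mk (fun X Y : ConjStab S P => ∃ g : G, g • X.1 = Y.1))), Nat.card_sigma,
    Finset.mul_sum, Finset.sum_congr rfl fun q _ => card_fiber_mul_card P q]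
  simp [mul_comm]

/-- Orbit-stabilizer counting with prescribed symmetry: for a finite group Γ acting on a
finite set 𝒮 and a subgroup Π ≤ Γ, with 𝒮_{[Π]} the set of pairs (X, Σ) where Σ is a
subgroup of the stabilizer of X conjugate to Π, 𝒞_{[Π]} the set of such pairs where Σ is
moreover a proper subgroup of the stabilizer, and N_{[Π]} the number of orbits whose
elements have stabilizer conjugate to Π, we have
|Π| · |𝒮_{[Π]}| = |Γ| · N_{[Π]} + |Π| · |𝒞_{[Π]}|. -/
theorem card_pairs_eq_card_orbits_add_card_proper_pairs
    {G : Type*} [Group G] [Finite G] {S : Type*} [Finite S] [MulAction G S]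
    (P : Subgroup G) :
    Nat.card P *
      Nat.card {p : S × Subgroup G //
        p.2 ≤ MulAction.stabilizer G p.1 ∧
        ∃ g : G, Subgroup.map (MulAut.conj g).toMonoidHom P = p.2} =
    Nat.card G *
      Nat.card (Quot (fun (X Y : {X : S //
          ∃ g : G, Subgroup.map (MulAut.conj g).toMonoidHom P =
            MulAction.stabilizer G X}) =>
        ∃ g : G, g • X.1 = Y.1)) +
    Nat.card P *
      Nat.card {p : S × Subgroup G //
        p.2 < MulAction.stabilizer G p.1 ∧
        ∃ g : G, Subgroup.map (MulAut.conj g).toMonoidHom P = p.2} := by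
  rw [card_pairs_eq_add, mul_add, card_mul_card_conjStab]
end

section
/- Let L be a Latin square of order n in triple system representation on point classes R, C, S, and let Π be a group of autoparatopisms of L (a subgroup of Γ_L) whose set of fixed points contains points from at least two of the three point classes. Then the fixed points induce a subsquare: the triples of L all of whose points are fixed by Π form a Latin square on the fixed points. In particular, if a nonidentity autoparatopism of L fixes f_R ≥ 1 points of R and f_C ≥ 1 points of C (and f_S points of S), then f_R = f_C = f_S ≤ n/2. -/
/-!
Let `x`, `y` be fixed points in different classes and `t` the triple through them. For an
autoparatopism `σ`, the triple `σ • t` lies in `L` and contains `x` and `y`, so `σ • t = t`; being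
injective, `σ` then fixes the third point of `t` as well (`fixed_third`). Hence the fixed points
are closed under completing pairs to triples, which is the subsquare property
(`isLatinOn_fixedPts`).

In a Latin square on classes `A`, `B`, `C`, joining with one point of `B` gives an injection from
`A` into `C` (`ncard_le`), so all classes have the same size once two of them are nonempty.
If `σ ≠ 1`, this forces some row `r` to be moved. For a fixed column `c`, the symbol completing
`r, c` must be moved, as otherwise `r` would be fixed; thus the fixed columns inject into
the moved symbols, and `f ≤ n - f`.

The definition of a Latin square is symmetric in the three classes (`isLatinOn_rotate`,
`isLatinOn_swap`), so each step is proved for one choice of classes only.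
-/

open Pointwise

/-- The points: n rows, n columns, n symbols. -/
abbrev Pt (n : ℕ) : Type := Fin n ⊕ Fin n ⊕ Fin n

/-- The point class of rows. -/
def Rcl (n : ℕ) : Set (Pt n) := Set.range Sum.inl

/-- The point class of columns. -/
def Ccl (n : ℕ) : Set (Pt n) := Set.range (fun i => Sum.inr (Sum.inl i))

/-- The point class of symbols. -/
def Scl (n : ℕ) : Set (Pt n) := Set.range (fun i => Sum.inr (Sum.inr i))

/-- A Latin square on prescribed point classes R', C', S' in triple system
representation. -/
def IsLatinOn {n : ℕ} (R' C' S' : Set (Pt n)) (L : Set (Set (Pt n))) : Prop :=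
  (∀ t ∈ L, ∃ r ∈ R', ∃ c ∈ C', ∃ s ∈ S', t = {r, c, s}) ∧
  (∀ x y : Pt n,
    ((x ∈ R' ∧ y ∈ C') ∨ (x ∈ R' ∧ y ∈ S') ∨ (x ∈ C' ∧ y ∈ S')) →
    ∃! t, t ∈ L ∧ x ∈ t ∧ y ∈ t)

/-- A Latin square of order n in triple system representation. -/
def IsLatin (n : ℕ) (L : Set (Set (Pt n))) : Prop :=
  IsLatinOn (Rcl n) (Ccl n) (Scl n) L

/-- The set of points fixed by every element of a set of permutations. -/
def FixedPts {n : ℕ} (P : Subgroup (Equiv.Perm (Pt n))) : Set (Pt n) :=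
  {x | ∀ σ ∈ P, σ x = x}

theorem isLatinOn_swap {n : ℕ} {A B C : Set (Pt n)} {L : Set (Set (Pt n))}
    (h : IsLatinOn A B C L) : IsLatinOn B A C L := by
  refine ⟨fun t ht => ?_, fun x y hxy => ?_⟩
  · obtain ⟨a, ha, b, hb, c, hc, rfl⟩ := h.1 t ht
    exact ⟨b, hb, a, ha, c, hc, Set.insert_comm _ _ _⟩
  · rcases hxy with hxy | hxy | hxy
    · obtain ⟨t, ht, hu⟩ := h.2 y x (Or.inl hxy.symm)
      exact ⟨t, ⟨ht.1, ht.2.2, ht.2.1⟩, fun u hu' => hu u ⟨hu'.1, hu'.2.2, hu'.2.1⟩⟩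
    · exact h.2 x y (Or.inr (Or.inr hxy))
    · exact h.2 x y (Or.inr (Or.inl hxy))

theorem isLatinOn_rotate {n : ℕ} {A B C : Set (Pt n)} {L : Set (Set (Pt n))}
    (h : IsLatinOn A B C L) : IsLatinOn B C A L := by
  refine ⟨fun t ht => ?_, fun x y hxy => ?_⟩
  · obtain ⟨a, ha, b, hb, c, hc, rfl⟩ := h.1 t ht
    refine ⟨b, hb, c, hc, a, ha, ?_⟩
    rw [Set.insert_comm, Set.pair_comm a c]
  · rcases hxy with hxy | hxy | hxy
    · exact h.2 x y (Or.inr (Or.inr hxy))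
    · obtain ⟨t, ht, hu⟩ := h.2 y x (Or.inl hxy.symm)
      exact ⟨t, ⟨ht.1, ht.2.2, ht.2.1⟩, fun u hu' => hu u ⟨hu'.1, hu'.2.2, hu'.2.1⟩⟩
    · obtain ⟨t, ht, hu⟩ := h.2 y x (Or.inr (Or.inl hxy.symm))
      exact ⟨t, ⟨ht.1, ht.2.2, ht.2.1⟩, fun u hu' => hu u ⟨hu'.1, hu'.2.2, hu'.2.1⟩⟩

theorem exists_third {n : ℕ} {A B C : Set (Pt n)} {L : Set (Set (Pt n))}
    (h : IsLatinOn A B C L) (hAB : Disjoint A B) (hAC : Disjoint A C) (hBC : Disjoint B C)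
    {a b : Pt n} (ha : a ∈ A) (hb : b ∈ B) : ∃ c ∈ C, ({a, b, c} : Set (Pt n)) ∈ L := by
  obtain ⟨t, ⟨ht, hat, hbt⟩, -⟩ := h.2 a b (Or.inl ⟨ha, hb⟩)
  obtain ⟨a', ha', b', hb', c, hc, rfl⟩ := h.1 t ht
  simp only [Set.mem_insert_iff, Set.mem_singleton_iff] at hat hbt
  rcases hat with rfl | rfl | rfl
  · rcases hbt with rfl | rfl | rfl
    · exact (Set.disjoint_left.1 hAB ha hb).elim
    · exact ⟨c, hc, ht⟩
    · exact (Set.disjoint_left.1 hBC hb hc).elim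
  · exact (Set.disjoint_left.1 hAB ha hb').elim
  · exact (Set.disjoint_left.1 hAC ha hc).elim

theorem third_unique {n : ℕ} {A B C : Set (Pt n)} {L : Set (Set (Pt n))}
    (h : IsLatinOn A B C L) (hAC : Disjoint A C) (hBC : Disjoint B C)
    {a b c c' : Pt n} (ha : a ∈ A) (hb : b ∈ B) (hc : c ∈ C)
    (ht : ({a, b, c} : Set (Pt n)) ∈ L) (ht' : ({a, b, c'} : Set (Pt n)) ∈ L) : c = c' := by
  have he : ({a, b, c} : Set (Pt n)) = {a, b, c'} :=
    (h.2 a b (Or.inl ⟨ha, hb⟩)).unique ⟨ht, by simp, by simp⟩ ⟨ht', by simp, by simp⟩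
  have hm : c ∈ ({a, b, c'} : Set (Pt n)) := by rw [← he]; simp
  simp only [Set.mem_insert_iff, Set.mem_singleton_iff] at hm
  rcases hm with rfl | rfl | rfl
  · exact (Set.disjoint_left.1 hAC ha hc).elim
  · exact (Set.disjoint_left.1 hBC hb hc).elim
  · rfl

/-- A permutation preserving `L` and fixing two points of a triple fixes the third one. -/
theorem fixed_third {n : ℕ} {A B C : Set (Pt n)} {L : Set (Set (Pt n))}
    (h : IsLatinOn A B C L) (hAC : Disjoint A C) (hBC : Disjoint B C)
    {σ : Equiv.Perm (Pt n)} (hσ : σ • L = L)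
    {a b c : Pt n} (ha : a ∈ A) (hb : b ∈ B) (hc : c ∈ C)
    (ht : ({a, b, c} : Set (Pt n)) ∈ L) (hσa : σ a = a) (hσb : σ b = b) : σ c = c := by
  have ht' : σ • ({a, b, c} : Set (Pt n)) ∈ L := by
    have := Set.smul_mem_smul_set (a := σ) ht
    rwa [hσ] at this
  have he : σ • ({a, b, c} : Set (Pt n)) = {a, b, σ c} := by
    simp only [Set.smul_set_insert, Set.smul_set_singleton, Equiv.Perm.smul_def, hσa, hσb]
  rw [he] at ht'
  exact (third_unique h hAC hBC ha hb hc ht ht').symm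

theorem disjoint_RC (n : ℕ) : Disjoint (Rcl n) (Ccl n) := by
  rw [Set.disjoint_left]
  rintro _ ⟨i, rfl⟩ ⟨j, hj⟩
  simp at hj

theorem disjoint_RS (n : ℕ) : Disjoint (Rcl n) (Scl n) := by
  rw [Set.disjoint_left]
  rintro _ ⟨i, rfl⟩ ⟨j, hj⟩
  simp at hj

theorem disjoint_CS (n : ℕ) : Disjoint (Ccl n) (Scl n) := by
  rw [Set.disjoint_left]
  rintro _ ⟨i, rfl⟩ ⟨j, hj⟩
  simp at hj

/-- Two fixed points of different classes lie in exactly one triple of fixed points. -/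
theorem existsUnique_fixed {n : ℕ} {A B C : Set (Pt n)} {L : Set (Set (Pt n))}
    (h : IsLatinOn A B C L) (hAB : Disjoint A B) (hAC : Disjoint A C) (hBC : Disjoint B C)
    {P : Subgroup (Equiv.Perm (Pt n))} (hP : ∀ σ ∈ P, σ • L = L)
    {x y : Pt n} (hx : x ∈ A ∩ FixedPts P) (hy : y ∈ B ∩ FixedPts P) :
    ∃! t, t ∈ {t ∈ L | t ⊆ FixedPts P} ∧ x ∈ t ∧ y ∈ t := by
  obtain ⟨z, hz, ht⟩ := exists_third h hAB hAC hBC hx.1 hy.1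
  refine ⟨{x, y, z}, ⟨⟨ht, ?_⟩, by simp, by simp⟩, ?_⟩
  · rintro w (rfl | rfl | rfl)
    · exact hx.2
    · exact hy.2
    · exact fun σ hσ => fixed_third h hAC hBC (hP σ hσ) hx.1 hy.1 hz ht (hx.2 σ hσ) (hy.2 σ hσ)
  · rintro u ⟨⟨hu, -⟩, hxu, hyu⟩
    exact (h.2 x y (Or.inl ⟨hx.1, hy.1⟩)).unique ⟨hu, hxu, hyu⟩ ⟨ht, by simp, by simp⟩

/-- The subsquare property. If the fixed points miss two of the classes, the induced square is
empty, so the statement needs no assumption on where the fixed points lie. -/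
theorem isLatinOn_fixedPts {n : ℕ} {L : Set (Set (Pt n))} (hL : IsLatin n L)
    {P : Subgroup (Equiv.Perm (Pt n))} (hP : ∀ σ ∈ P, σ • L = L) :
    IsLatinOn (Rcl n ∩ FixedPts P) (Ccl n ∩ FixedPts P) (Scl n ∩ FixedPts P)
      {t ∈ L | t ⊆ FixedPts P} := by
  have hRC := disjoint_RC n
  have hRS := disjoint_RS n
  have hCS := disjoint_CS n
  refine ⟨?_, ?_⟩
  · rintro t ⟨ht, hs⟩
    obtain ⟨r, hr, c, hc, s, hs', rfl⟩ := hL.1 t ht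
    exact ⟨r, ⟨hr, hs (by simp)⟩, c, ⟨hc, hs (by simp)⟩, s, ⟨hs', hs (by simp)⟩, rfl⟩
  · rintro x y (⟨hx, hy⟩ | ⟨hx, hy⟩ | ⟨hx, hy⟩)
    · exact existsUnique_fixed hL hRC hRS hCS hP hx hy
    · exact existsUnique_fixed (isLatinOn_rotate (isLatinOn_swap hL)) hRS hRC hCS.symm hP hx hy
    · exact existsUnique_fixed (isLatinOn_rotate hL) hCS hRC.symm hRS.symm hP hx hy

/-- For a fixed `b ∈ B`, completing `a, b` to a triple is injective in `a`; here `A'` is any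
part of `A` whose points are completed inside `C'`. -/
theorem ncard_le_of_third {n : ℕ} {A B C A' C' : Set (Pt n)} {L : Set (Set (Pt n))}
    (h : IsLatinOn A B C L) (hAB : Disjoint A B) (hAC : Disjoint A C) (hBC : Disjoint B C)
    {b : Pt n} (hb : b ∈ B) (hA' : A' ⊆ A)
    (hC' : ∀ a ∈ A', ∀ c ∈ C, ({a, b, c} : Set (Pt n)) ∈ L → c ∈ C') :
    A'.ncard ≤ C'.ncard := by
  choose! f hfC hfL using fun a (ha : a ∈ A') => exists_third h hAB hAC hBC (hA' ha) hb
  refine Set.ncard_le_ncard_of_injOn f (fun a ha => hC' a ha _ (hfC a ha) (hfL a ha)) ?_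
    (Set.toFinite _)
  intro a ha a' ha' hf
  have h1 := hfL a ha
  have h2 := hfL a' ha'
  rw [← hf] at h2
  rw [Set.insert_comm, Set.pair_comm] at h1 h2
  exact third_unique (isLatinOn_rotate h) hAB.symm hAC.symm hb (hfC a ha) (hA' ha) h1 h2

theorem ncard_le {n : ℕ} {A B C : Set (Pt n)} {L : Set (Set (Pt n))}
    (h : IsLatinOn A B C L) (hAB : Disjoint A B) (hAC : Disjoint A C) (hBC : Disjoint B C)
    (hB : B.Nonempty) : A.ncard ≤ C.ncard := by
  obtain ⟨b, hb⟩ := hB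
  exact ncard_le_of_third h hAB hAC hBC hb subset_rfl fun _ _ _ hc _ => hc

theorem ncard_R (n : ℕ) : (Rcl n).ncard = n := by
  rw [Rcl, ← Set.image_univ, Set.ncard_image_of_injective _ Sum.inl_injective]
  simp

theorem ncard_C (n : ℕ) : (Ccl n).ncard = n := by
  rw [Ccl, ← Set.image_univ,
    Set.ncard_image_of_injective _ fun _ _ h => Sum.inl_injective (Sum.inr_injective h)]
  simp

theorem ncard_S (n : ℕ) : (Scl n).ncard = n := by
  rw [Scl, ← Set.image_univ,
    Set.ncard_image_of_injective _ fun _ _ h => Sum.inr_injective (Sum.inr_injective h)]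
  simp

theorem fixedPts_zpowers {n : ℕ} (σ : Equiv.Perm (Pt n)) :
    FixedPts (Subgroup.zpowers σ) = {x | σ x = x} := by
  ext x
  refine ⟨fun h => h σ (Subgroup.mem_zpowers σ), fun h τ hτ => ?_⟩
  have hle : Subgroup.zpowers σ ≤ MulAction.stabilizer (Equiv.Perm (Pt n)) x :=
    Subgroup.zpowers_le.2 h
  exact hle hτ

/-- If a group of autoparatopisms of a Latin square L of order n fixes points
from at least two point classes, then the triples of L consisting entirely of
fixed points form a Latin square on the fixed points. In particular, for a
nonidentity autoparatopism with f_R ≥ 1 and f_C ≥ 1 fixed points in R and C,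
f_R = f_C = f_S ≤ n/2. -/
theorem fixed_points_induce_subsquare
    (n : ℕ) (L : Set (Set (Pt n))) (hL : IsLatin n L) :
    (∀ P : Subgroup (Equiv.Perm (Pt n)),
      (∀ σ ∈ P, σ • ({Rcl n, Ccl n, Scl n} : Set (Set (Pt n))) =
          {Rcl n, Ccl n, Scl n} ∧ σ • L = L) →
      (((Rcl n ∩ FixedPts P).Nonempty ∧ (Ccl n ∩ FixedPts P).Nonempty) ∨
        ((Rcl n ∩ FixedPts P).Nonempty ∧ (Scl n ∩ FixedPts P).Nonempty) ∨
        ((Ccl n ∩ FixedPts P).Nonempty ∧ (Scl n ∩ FixedPts P).Nonempty)) →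
      IsLatinOn (Rcl n ∩ FixedPts P) (Ccl n ∩ FixedPts P) (Scl n ∩ FixedPts P)
        {t ∈ L | t ⊆ FixedPts P}) ∧
    (∀ σ : Equiv.Perm (Pt n), σ ≠ 1 →
      σ • ({Rcl n, Ccl n, Scl n} : Set (Set (Pt n))) = {Rcl n, Ccl n, Scl n} →
      σ • L = L →
      1 ≤ Nat.card {x : Pt n // x ∈ Rcl n ∧ σ x = x} →
      1 ≤ Nat.card {x : Pt n // x ∈ Ccl n ∧ σ x = x} →
      Nat.card {x : Pt n // x ∈ Rcl n ∧ σ x = x} =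
          Nat.card {x : Pt n // x ∈ Ccl n ∧ σ x = x} ∧
        Nat.card {x : Pt n // x ∈ Ccl n ∧ σ x = x} =
          Nat.card {x : Pt n // x ∈ Scl n ∧ σ x = x} ∧
        2 * Nat.card {x : Pt n // x ∈ Rcl n ∧ σ x = x} ≤ n) := by
  refine ⟨fun P hP _ => isLatinOn_fixedPts hL fun σ hσ => (hP σ hσ).2, ?_⟩
  intro σ hne _ hσ h1 h2
  have hsub := isLatinOn_fixedPts hL (P := Subgroup.zpowers σ) fun τ hτ =>
    (Subgroup.zpowers_le.2 hσ : _ ≤ MulAction.stabilizer (Equiv.Perm (Pt n)) L) hτ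
  rw [fixedPts_zpowers] at hsub
  set F : Set (Pt n) := {x | σ x = x} with hF
  change 1 ≤ (Rcl n ∩ F).ncard at h1
  change 1 ≤ (Ccl n ∩ F).ncard at h2
  change (Rcl n ∩ F).ncard = (Ccl n ∩ F).ncard ∧ (Ccl n ∩ F).ncard = (Scl n ∩ F).ncard ∧
    2 * (Rcl n ∩ F).ncard ≤ n
  have hRC := disjoint_RC n
  have hRS := disjoint_RS n
  have hCS := disjoint_CS n
  have hRC' : Disjoint (Rcl n ∩ F) (Ccl n ∩ F) :=
    hRC.mono Set.inter_subset_left Set.inter_subset_left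
  have hRS' : Disjoint (Rcl n ∩ F) (Scl n ∩ F) :=
    hRS.mono Set.inter_subset_left Set.inter_subset_left
  have hCS' : Disjoint (Ccl n ∩ F) (Scl n ∩ F) :=
    hCS.mono Set.inter_subset_left Set.inter_subset_left
  have hR : (Rcl n ∩ F).Nonempty := Set.nonempty_of_ncard_ne_zero (by omega)
  have hC : (Ccl n ∩ F).Nonempty := Set.nonempty_of_ncard_ne_zero (by omega)
  have e1 := ncard_le hsub hRC' hRS' hCS' hC
  have e2 := ncard_le (isLatinOn_swap (isLatinOn_rotate hsub)) hCS'.symm hRS'.symm hRC'.symm hC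
  have e3 := ncard_le (isLatinOn_swap hsub) hRC'.symm hCS' hRS' hR
  have e4 := ncard_le (isLatinOn_rotate (isLatinOn_rotate hsub)) hRS'.symm hCS'.symm hRC' hR
  refine ⟨by omega, by omega, ?_⟩
  obtain ⟨r, hr, hrF⟩ : ∃ r ∈ Rcl n, r ∉ F := by
    by_contra! hall
    have hRn : (Rcl n ∩ F).ncard = n := by
      rw [Set.inter_eq_left.2 hall, ncard_R]
    have hCF : Ccl n ∩ F = Ccl n :=
      Set.eq_of_subset_of_ncard_le Set.inter_subset_left (by rw [ncard_C]; omega)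
    have hSF : Scl n ∩ F = Scl n :=
      Set.eq_of_subset_of_ncard_le Set.inter_subset_left (by rw [ncard_S]; omega)
    refine hne (Equiv.ext fun x => ?_)
    rcases x with i | i | i
    · exact hall _ ⟨i, rfl⟩
    · exact (Set.inter_eq_left.1 hCF) ⟨i, rfl⟩
    · exact (Set.inter_eq_left.1 hSF) ⟨i, rfl⟩
  have hle : (Ccl n ∩ F).ncard ≤ (Scl n \ F).ncard := by
    refine ncard_le_of_third (isLatinOn_swap hL) hRC.symm hCS hRS hr Set.inter_subset_left ?_
    rintro c ⟨hc, hcF⟩ s hs ht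
    refine ⟨hs, fun hsF => hrF ?_⟩
    rw [Set.pair_comm r s] at ht
    exact fixed_third (isLatinOn_rotate hL) hRC.symm hRS.symm hσ hc hs hr ht hcF hsF
  have hsum := Set.ncard_inter_add_ncard_sdiff_eq_ncard (Scl n) F
  rw [ncard_S] at hsum
  omega
end

section
/- Let n be a positive integer, let R, C, S be pairwise disjoint n-element sets, and let Π be an order-2 subgroup of the group Γ of permutations of R∪C∪S fixing the partition {R,C,S} setwise, such that Π fixes the class S setwise. Let Δ be the restriction of Π to R∪C. Let 𝓕 be a one-factorization of K_{n,n} (on vertex set R∪C) that is invariant under Δ. Then 𝓕 is compatible with Π — i.e., there exists a bijection f: S → 𝓕 such that the Latin square corresponding to (𝓕, f) admits every element of Π as an autoparatopism — if and only if, for each length i ∈ {1,2}, the number of Δ-orbits of length i on the set of one-factors 𝓕 equals the number of Π-orbits of length i on S. -/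
/-!
A labelling `f : S → 𝓕` gives a `Π`-invariant Latin square exactly when it is `Π`-equivariant,
`f (σ s) = σ • f s` (`equivariant_of_invariant`, `invariant_of_equivariant`): an edge of `f s` is
moved by `σ` to an edge of both `σ • f s` and `f (σ s)`, and two one-factors of `𝓕` sharing an edge
coincide. Hence compatibility means that `𝓕` and `S` are isomorphic as `Π`-sets.

Isomorphic `Π`-sets have the same number of orbits of each length (`card_orbits_eq`). Conversely,
`Π` is generated by one involution `g`, and `|𝓕| = n = |S|` (`card_factorization`). Orbits of
length one are the fixed points of `g` (`card_orbits_one`), so if their numbers agree then the two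
involutions have the same cycle type, and are therefore conjugate through a bijection `S → 𝓕`
(`exists_equivariant_equiv`).
-/


open Pointwise

/-- A one-factor (perfect matching) of K_{n,n} on the vertex set R ∪ C. -/
def IsOneFactor (n : ℕ) (M : Set (Set (Pt n))) : Prop :=
  (∀ e ∈ M, ∃ r ∈ Rcl n, ∃ c ∈ Ccl n, e = {r, c}) ∧
  (∀ v ∈ Rcl n ∪ Ccl n, ∃! e, e ∈ M ∧ v ∈ e)

/-- A one-factorization of K_{n,n}: every edge lies in exactly one one-factor. -/
def IsOneFactorization (n : ℕ) (F : Set (Set (Set (Pt n)))) : Prop :=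
  (∀ M ∈ F, IsOneFactor n M) ∧
  (∀ r ∈ Rcl n, ∀ c ∈ Ccl n, ∃! M, M ∈ F ∧ ({r, c} : Set (Pt n)) ∈ M)

/-- The Latin square associated with a labelling f of one-factors by symbols:
{r,c,s} is a triple iff {r,c} is an edge of the one-factor f(s). -/
def latinOf (n : ℕ) (f : (Scl n) → Set (Set (Pt n))) : Set (Set (Pt n)) :=
  {t | ∃ r ∈ Rcl n, ∃ c ∈ Ccl n, ∃ s : (Scl n),
    t = {r, c, (s : Pt n)} ∧ ({r, c} : Set (Pt n)) ∈ f s}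

/-! ### Orbits of a group action -/

/-- A bijection of invariant sets that commutes with the action matches up the orbits of each
length. -/
lemma card_orbits_eq {G X Y : Type*} [Group G] [MulAction G X] [MulAction G Y] (P : Subgroup G)
    (A : Set X) (B : Set Y) (φ : X → Y) (hφ : Set.BijOn φ A B)
    (hA : ∀ σ ∈ P, ∀ x ∈ A, σ • x ∈ A)
    (hcomm : ∀ σ ∈ P, ∀ x ∈ A, φ (σ • x) = σ • φ x) (i : ℕ) :
    Nat.card {O : Set Y // (∃ y ∈ B, O = {z | ∃ σ ∈ P, z = σ • y}) ∧ Nat.card O = i} =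
    Nat.card {O : Set X // (∃ x ∈ A, O = {z | ∃ σ ∈ P, z = σ • x}) ∧ Nat.card O = i} := by
  have himg : ∀ x ∈ A, φ '' {z | ∃ σ ∈ P, z = σ • x} = {z | ∃ σ ∈ P, z = σ • φ x} := by
    intro x hx
    ext z
    constructor
    · rintro ⟨_, ⟨σ, hσ, rfl⟩, rfl⟩
      exact ⟨σ, hσ, hcomm σ hσ x hx⟩
    · rintro ⟨σ, hσ, rfl⟩
      exact ⟨σ • x, ⟨σ, hσ, rfl⟩, hcomm σ hσ x hx⟩
  have hsub : ∀ x ∈ A, {z | ∃ σ ∈ P, z = σ • x} ⊆ A := by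
    rintro x hx _ ⟨σ, hσ, rfl⟩
    exact hA σ hσ x hx
  have hcard : ∀ O ⊆ A, Nat.card (φ '' O) = Nat.card O := fun O hO =>
    Nat.card_image_of_injOn (hφ.injOn.mono hO)
  symm
  refine Nat.card_congr (Set.BijOn.equiv
    (s := {O : Set X | (∃ x ∈ A, O = {z | ∃ σ ∈ P, z = σ • x}) ∧ Nat.card O = i})
    (t := {O : Set Y | (∃ y ∈ B, O = {z | ∃ σ ∈ P, z = σ • y}) ∧ Nat.card O = i})
    (fun O => φ '' O) ⟨?_, ?_, ?_⟩)
  · rintro _ ⟨⟨x, hx, rfl⟩, hi⟩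
    exact ⟨⟨φ x, hφ.mapsTo hx, himg x hx⟩, (hcard _ (hsub x hx)).trans hi⟩
  · rintro _ ⟨⟨x, hx, rfl⟩, -⟩ _ ⟨⟨y, hy, rfl⟩, -⟩ h
    exact (hφ.injOn.image_eq_image_iff (hsub x hx) (hsub y hy)).1 h
  · rintro _ ⟨⟨y, hy, rfl⟩, hi⟩
    obtain ⟨x, hx, rfl⟩ := hφ.surjOn hy
    refine ⟨_, ⟨⟨x, hx, rfl⟩, ?_⟩, himg x hx⟩
    rw [← hcard _ (hsub x hx), himg x hx, hi]

/-- Orbits of length one are in bijection with fixed points. -/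
lemma card_orbits_one {G X : Type*} [Group G] [MulAction G X] (P : Subgroup G) (A : Set X) :
    Nat.card {O : Set X // (∃ x ∈ A, O = {z | ∃ σ ∈ P, z = σ • x}) ∧ Nat.card O = 1} =
    Nat.card {x : X // x ∈ A ∧ ∀ σ ∈ P, σ • x = x} := by
  symm
  refine Nat.card_congr (Set.BijOn.equiv
    (s := {x : X | x ∈ A ∧ ∀ σ ∈ P, σ • x = x})
    (t := {O : Set X | (∃ x ∈ A, O = {z | ∃ σ ∈ P, z = σ • x}) ∧ Nat.card O = 1})
    (fun x => {x}) ⟨?_, ?_, ?_⟩)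
  · rintro x ⟨hx, hfix⟩
    refine ⟨⟨x, hx, ?_⟩, by simp⟩
    ext z
    constructor
    · rintro rfl
      exact ⟨1, P.one_mem, (one_smul G z).symm⟩
    · rintro ⟨σ, hσ, rfl⟩
      exact hfix σ hσ
  · intro x _ y _ h
    exact Set.singleton_injective h
  · rintro _ ⟨⟨x, hx, rfl⟩, hi⟩
    rw [Nat.card_coe_set_eq, Set.ncard_eq_one] at hi
    obtain ⟨w, hw⟩ := hi
    have hmem : ∀ σ ∈ P, σ • x = w := fun σ hσ => by
      have : σ • x ∈ {z | ∃ σ ∈ P, z = σ • x} := ⟨σ, hσ, rfl⟩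
      rwa [hw] at this
    have hxw : x = w := by simpa using hmem 1 P.one_mem
    exact ⟨x, ⟨hx, fun σ hσ => (hmem σ hσ).trans hxw.symm⟩, by rw [hw, hxw]⟩

/-! ### Involutions -/

lemma cycleType_of_mul_self {α : Type*} [Fintype α] [DecidableEq α] (a : Equiv.Perm α)
    (ha : a * a = 1) : a.cycleType = Multiset.replicate (a.support.card / 2) 2 := by
  have h2 : ∀ m ∈ a.cycleType, m = 2 := by
    intro m hm
    have h1 := Equiv.Perm.two_le_of_mem_cycleType hm
    have h3 := (Equiv.Perm.dvd_of_mem_cycleType hm).trans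
      (orderOf_dvd_of_pow_eq_one (n := 2) (by rw [pow_two, ha]))
    exact le_antisymm (Nat.le_of_dvd two_pos h3) h1
  have h := Multiset.eq_replicate_card.2 h2
  have hs := Equiv.Perm.sum_cycleType a
  rw [h, Multiset.sum_replicate, smul_eq_mul] at hs
  rw [h, ← hs, Nat.mul_div_cancel _ two_pos]

/-- The number of fixed points determines the cycle type of an involution, hence its conjugacy
class. -/
lemma exists_equivariant_equiv {α β : Type*} [Finite α] [Finite β] (a : Equiv.Perm α)
    (b : Equiv.Perm β) (ha : a * a = 1) (hb : b * b = 1) (hcard : Nat.card α = Nat.card β)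
    (hfix : Nat.card {x // a x = x} = Nat.card {y // b y = y}) :
    ∃ e : α ≃ β, ∀ x, e (a x) = b (e x) := by
  classical
  have := Fintype.ofFinite α
  have e₀ : α ≃ β := (Finite.card_eq.1 hcard).some
  set b' : Equiv.Perm α := e₀.symm.permCongr b with hb'
  have happ : ∀ x, b' x = e₀.symm (b (e₀ x)) := fun x => by simp [hb', Equiv.permCongr_apply]
  have hbb : b' * b' = 1 := by
    ext x
    have := Equiv.congr_fun hb (e₀ x)
    simp only [Equiv.Perm.mul_apply, Equiv.Perm.one_apply] at this
    simp [happ, this]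
  have hfix' : Nat.card {x // a x = x} = Nat.card {x // b' x = x} := by
    rw [hfix]
    exact (Nat.card_congr (e₀.subtypeEquiv fun x => by
      rw [happ, Equiv.symm_apply_eq])).symm
  have hsupp : ∀ c : Equiv.Perm α, c.support.card + Nat.card {x // c x = x} = Nat.card α := by
    intro c
    rw [Nat.card_eq_fintype_card, Nat.card_eq_fintype_card, Fintype.card_subtype,
      ← Finset.card_univ, add_comm]
    exact Finset.card_filter_add_card_filter_not (fun x => c x = x)
  have hconj : IsConj a b' := by
    rw [Equiv.Perm.isConj_iff_cycleType_eq, cycleType_of_mul_self a ha,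
      cycleType_of_mul_self b' hbb]
    have h1 := hsupp a
    have h2 := hsupp b'
    rw [show a.support.card = b'.support.card by omega]
  obtain ⟨c, hc⟩ := isConj_iff.1 hconj
  refine ⟨c.trans e₀, fun x => ?_⟩
  have := Equiv.congr_fun (mul_inv_eq_iff_eq_mul.1 hc) x
  simp only [Equiv.Perm.mul_apply] at this
  simp [this, happ]

lemma exists_generator {G : Type*} [Group G] (P : Subgroup G) (h : Nat.card P = 2) :
    ∃ g ∈ P, g * g = 1 ∧ ∀ σ ∈ P, σ = 1 ∨ σ = g := by
  obtain ⟨g, -, hg⟩ := (Nat.card_eq_two_iff' (1 : P)).1 h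
  refine ⟨g, g.2, ?_, fun σ hσ => ?_⟩
  · have := pow_card_eq_one' (x := g)
    rw [h, pow_two] at this
    exact congrArg Subtype.val this
  · by_cases h1 : σ = 1
    · exact Or.inl h1
    · exact Or.inr (congrArg Subtype.val (hg ⟨σ, hσ⟩ fun h' => h1 (congrArg Subtype.val h')))

/-! ### One-factorizations and Latin squares -/

lemma rcl_not_scl {n : ℕ} {r : Pt n} (h : r ∈ Rcl n) : r ∉ Scl n := by
  rintro ⟨j, rfl⟩
  obtain ⟨i, hi⟩ := h
  simp at hi

lemma ccl_not_scl {n : ℕ} {c : Pt n} (h : c ∈ Ccl n) : c ∉ Scl n := by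
  rintro ⟨j, rfl⟩
  obtain ⟨i, hi⟩ := h
  simp at hi

lemma rcl_not_ccl {n : ℕ} {r : Pt n} (h : r ∈ Rcl n) : r ∉ Ccl n := by
  rintro ⟨j, rfl⟩
  obtain ⟨i, hi⟩ := h
  simp at hi

lemma card_Scl (n : ℕ) : Nat.card (Scl n) = n := by
  have h : Function.Injective (fun i : Fin n => (Sum.inr (Sum.inr i) : Pt n)) := fun i j h => by
    simpa using h
  rw [Scl, ← Nat.card_congr (Equiv.ofInjective _ h), Nat.card_fin]

/-- A triple determines its symbol and its row-column edge. -/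
lemma triple_inj {n : ℕ} {r c s r' c' s' : Pt n} (hr : r ∈ Rcl n) (hc : c ∈ Ccl n)
    (hs : s ∈ Scl n) (hr' : r' ∈ Rcl n) (hc' : c' ∈ Ccl n) (hs' : s' ∈ Scl n)
    (h : ({r, c, s} : Set (Pt n)) = {r', c', s'}) :
    s = s' ∧ ({r, c} : Set (Pt n)) = {r', c'} := by
  have h1 := rcl_not_scl hr
  have h2 := ccl_not_scl hc
  have h3 := rcl_not_scl hr'
  have h4 := ccl_not_scl hc'
  have hmem : ∀ x, (x = r ∨ x = c ∨ x = s) ↔ (x = r' ∨ x = c' ∨ x = s') := fun x => by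
    simpa using Set.ext_iff.1 h x
  constructor
  · rcases (hmem s).1 (Or.inr (Or.inr rfl)) with h | h | h
    · exact absurd (h ▸ hs) h3
    · exact absurd (h ▸ hs) h4
    · exact h
  · ext x
    have hx := hmem x
    simp only [Set.mem_insert_iff, Set.mem_singleton_iff]
    grind

lemma factor_eq_of_edge {n : ℕ} {F : Set (Set (Set (Pt n)))} (hF : IsOneFactorization n F)
    {M N : Set (Set (Pt n))} (hM : M ∈ F) (hN : N ∈ F) {e : Set (Pt n)} (heM : e ∈ M)
    (heN : e ∈ N) : M = N := by
  obtain ⟨r, hr, c, hc, rfl⟩ := (hF.1 M hM).1 e heM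
  exact (hF.2 r hr c hc).unique ⟨hM, heM⟩ ⟨hN, heN⟩

/-- For a fixed row `r`, sending a column `c` to the one-factor containing `{r, c}` is a bijection
onto the one-factorization. -/
lemma card_factorization {n : ℕ} (hn : 0 < n) {F : Set (Set (Set (Pt n)))}
    (hF : IsOneFactorization n F) : Nat.card F = n := by
  let r : Pt n := Sum.inl ⟨0, hn⟩
  have hr : r ∈ Rcl n := ⟨_, rfl⟩
  have hcol : ∀ i : Fin n, (Sum.inr (Sum.inl i) : Pt n) ∈ Ccl n := fun i => ⟨i, rfl⟩
  choose m hm _ using fun i : Fin n => hF.2 r hr _ (hcol i)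
  have hbij : Function.Bijective (fun i : Fin n => (⟨m i, (hm i).1⟩ : F)) := by
    constructor
    · intro i j hij
      have hij' : m i = m j := congrArg Subtype.val hij
      have he := ((hF.1 _ (hm j).1).2 r (Or.inl hr)).unique
        ⟨hij' ▸ (hm i).2, by simp⟩ ⟨(hm j).2, by simp⟩
      have hmem : (Sum.inr (Sum.inl i) : Pt n) ∈ ({r, Sum.inr (Sum.inl j)} : Set (Pt n)) := by
        rw [← he]; simp
      simpa [r] using hmem
    · rintro ⟨M, hM⟩
      obtain ⟨e, ⟨heM, hre⟩, -⟩ := (hF.1 M hM).2 r (Or.inl hr)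
      obtain ⟨r', hr', c, ⟨i, rfl⟩, rfl⟩ := (hF.1 M hM).1 e heM
      have : r = r' := by
        rcases hre with h | h
        · exact h
        · exact absurd ⟨i, h.symm⟩ (rcl_not_ccl hr)
      subst this
      exact ⟨i, Subtype.ext (factor_eq_of_edge hF (hm i).1 hM (hm i).2 heM)⟩
  rw [← Nat.card_congr (Equiv.ofBijective _ hbij), Nat.card_fin]

lemma mem_Scl_of_fix {n : ℕ} {σ : Equiv.Perm (Pt n)} (h : σ • Scl n = Scl n) {s : Pt n}
    (hs : s ∈ Scl n) : σ s ∈ Scl n := by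
  rw [← h]
  exact Set.smul_mem_smul_set hs

lemma smul_triple {n : ℕ} (σ : Equiv.Perm (Pt n)) (r c s : Pt n) :
    σ • ({r, c, s} : Set (Pt n)) = σ • ({r, c} : Set (Pt n)) ∪ {σ s} := by
  ext x
  simp only [Set.smul_set_insert, Set.smul_set_singleton, Set.mem_union, Set.mem_insert_iff,
    Set.mem_singleton_iff, Equiv.Perm.smul_def]
  tauto

lemma pair_union {n : ℕ} (r c s : Pt n) : ({r, c} : Set (Pt n)) ∪ {s} = {r, c, s} := by
  rw [Set.insert_union, Set.singleton_union]

lemma equivariant_of_invariant {n : ℕ} (hn : 0 < n) {F : Set (Set (Set (Pt n)))}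
    (hF : IsOneFactorization n F) {f : Scl n → Set (Set (Pt n))} (hf : ∀ s, f s ∈ F)
    {σ : Equiv.Perm (Pt n)} (hS : ∀ s ∈ Scl n, σ s ∈ Scl n) (hσF : σ • F = F)
    (hL : σ • latinOf n f = latinOf n f) (s : Scl n) :
    f ⟨σ s, hS s s.2⟩ = σ • f s := by
  have hσf : σ • f s ∈ F := by
    rw [← hσF]
    exact Set.smul_mem_smul_set (hf s)
  obtain ⟨e, ⟨he, -⟩, -⟩ := (hF.1 _ (hf s)).2 (Sum.inl ⟨0, hn⟩) (Or.inl ⟨_, rfl⟩)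
  obtain ⟨r, hr, c, hc, rfl⟩ := (hF.1 _ (hf s)).1 e he
  have hedge : σ • ({r, c} : Set (Pt n)) ∈ σ • f s := Set.smul_mem_smul_set he
  obtain ⟨r₁, hr₁, c₁, hc₁, h₁⟩ := (hF.1 _ hσf).1 _ hedge
  have ht : σ • ({r, c, (s : Pt n)} : Set (Pt n)) ∈ latinOf n f := by
    rw [← hL]
    exact Set.smul_mem_smul_set ⟨r, hr, c, hc, s, rfl, he⟩
  obtain ⟨r₂, hr₂, c₂, hc₂, s₂, h₂, he₂⟩ := ht
  rw [smul_triple, h₁, pair_union] at h₂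
  obtain ⟨hs, hrc⟩ := triple_inj hr₁ hc₁ (hS s s.2) hr₂ hc₂ s₂.2 h₂
  have hs' : s₂ = ⟨σ s, hS s s.2⟩ := Subtype.ext hs.symm
  subst hs'
  rw [← hrc, ← h₁] at he₂
  exact factor_eq_of_edge hF (hf _) hσf he₂ hedge

lemma smul_latin_subset {n : ℕ} {F : Set (Set (Set (Pt n)))}
    (hF : IsOneFactorization n F) {f : Scl n → Set (Set (Pt n))} (hf : ∀ s, f s ∈ F)
    {σ : Equiv.Perm (Pt n)} (hS : ∀ s ∈ Scl n, σ s ∈ Scl n)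
    (heq : ∀ s : Scl n, f ⟨σ s, hS s s.2⟩ = σ • f s) :
    σ • latinOf n f ⊆ latinOf n f := by
  rintro _ ⟨_, ⟨r, hr, c, hc, s, rfl, he⟩, rfl⟩
  have hedge : σ • ({r, c} : Set (Pt n)) ∈ f ⟨σ s, hS s s.2⟩ := by
    rw [heq]
    exact Set.smul_mem_smul_set he
  obtain ⟨r₁, hr₁, c₁, hc₁, h₁⟩ := (hF.1 _ (hf _)).1 _ hedge
  refine ⟨r₁, hr₁, c₁, hc₁, ⟨σ s, hS s s.2⟩, ?_, h₁ ▸ hedge⟩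
  change σ • ({r, c, (s : Pt n)} : Set (Pt n)) = _
  rw [smul_triple, h₁, pair_union]

/-- An involution that maps the Latin square into itself maps it onto itself, so the inclusion
`smul_latin_subset` is enough. -/
lemma invariant_of_equivariant {n : ℕ} {F : Set (Set (Set (Pt n)))}
    (hF : IsOneFactorization n F) {f : Scl n → Set (Set (Pt n))} (hf : ∀ s, f s ∈ F)
    {σ : Equiv.Perm (Pt n)} (hσ : σ * σ = 1) (hS : ∀ s ∈ Scl n, σ s ∈ Scl n)
    (heq : ∀ s : Scl n, f ⟨σ s, hS s s.2⟩ = σ • f s) :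
    σ • latinOf n f = latinOf n f := by
  have h := smul_latin_subset hF hf hS heq
  refine h.antisymm ?_
  have h2 := Set.smul_set_mono (a := σ) h
  rwa [smul_smul, hσ, one_smul] at h2

/-! ### The characterization of compatibility -/

/-- Let Π be an order-2 subgroup of the paratopy group fixing the symbol class S
setwise, and let 𝓕 be a one-factorization of K_{n,n} invariant under (the
restriction to R ∪ C of) Π. Then 𝓕 is compatible with Π — some bijective
labelling f : S → 𝓕 yields a Latin square admitting every element of Π as an
autoparatopism — if and only if for each i ∈ {1,2} the number of orbits of
length i of Π on the one-factors of 𝓕 equals the number of orbits of length i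
of Π on S. -/
theorem compatible_iff_orbit_lengths_match
    (n : ℕ) (hn : 0 < n) (P : Subgroup (Equiv.Perm (Pt n)))
    (hcard : Nat.card P = 2)
    (hpart : ∀ σ ∈ P, σ • ({Rcl n, Ccl n, Scl n} : Set (Set (Pt n))) =
      {Rcl n, Ccl n, Scl n})
    (hfixS : ∀ σ ∈ P, σ • Scl n = Scl n)
    (F : Set (Set (Set (Pt n)))) (hF : IsOneFactorization n F)
    (hinv : ∀ σ ∈ P, σ • F = F) :
    (∃ f : (Scl n) → Set (Set (Pt n)), Set.BijOn f Set.univ F ∧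
      ∀ σ ∈ P, σ • latinOf n f = latinOf n f) ↔
    (∀ i ∈ ({1, 2} : Set ℕ),
      Nat.card {O : Set (Set (Set (Pt n))) //
          (∃ M ∈ F, O = {N | ∃ σ ∈ P, N = σ • M}) ∧ Nat.card O = i} =
      Nat.card {O : Set (Pt n) //
          (∃ s ∈ Scl n, O = {y | ∃ σ ∈ P, y = σ s}) ∧ Nat.card O = i}) := by
  classical
  have hS : ∀ σ ∈ P, ∀ s ∈ Scl n, σ s ∈ Scl n := fun σ hσ s hs =>
    mem_Scl_of_fix (hfixS σ hσ) hs
  constructor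
  · rintro ⟨f, hbij, hL⟩ i -
    have hf : ∀ s, f s ∈ F := fun s => hbij.mapsTo (Set.mem_univ s)
    -- `f` extended by an arbitrary value outside the symbol class
    let φ : Pt n → Set (Set (Pt n)) := fun x => if h : x ∈ Scl n then f ⟨x, h⟩ else ∅
    have hφ : ∀ (x) (h : x ∈ Scl n), φ x = f ⟨x, h⟩ := fun x h => dif_pos h
    refine card_orbits_eq P (Scl n) F φ ⟨?_, ?_, ?_⟩ hS ?_ i
    · intro x hx
      rw [hφ x hx]
      exact hf _
    · intro x hx y hy h
      rw [hφ x hx, hφ y hy] at h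
      exact congrArg Subtype.val (hbij.injOn (Set.mem_univ _) (Set.mem_univ _) h)
    · intro M hM
      obtain ⟨s, -, rfl⟩ := hbij.surjOn hM
      exact ⟨s, s.2, hφ s s.2⟩
    · intro σ hσ x hx
      rw [hφ x hx, Equiv.Perm.smul_def, hφ _ (hS σ hσ x hx)]
      exact equivariant_of_invariant hn hF hf (hS σ hσ) (hinv σ hσ) (hL σ hσ) ⟨x, hx⟩
  · intro h
    obtain ⟨g, hgP, hgg, hP⟩ := exists_generator P hcard
    have h1 := h 1 (by simp)
    have h1' := (card_orbits_one P F).symm.trans (h1.trans (card_orbits_one P (Scl n)))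
    have hgF : ∀ M, g • M ∈ F ↔ M ∈ F := fun M => by
      conv_lhs => rw [← hinv g hgP]
      exact Set.smul_mem_smul_set_iff
    have hgS : ∀ s, g • s ∈ Scl n ↔ s ∈ Scl n := fun s => by
      conv_lhs => rw [← hfixS g hgP]
      exact Set.smul_mem_smul_set_iff
    let a : Equiv.Perm (Scl n) := (MulAction.toPerm g).subtypePerm hgS
    let b : Equiv.Perm F := (MulAction.toPerm g).subtypePerm hgF
    have hfixed : ∀ {X : Type} [MulAction (Equiv.Perm (Pt n)) X] (x : X),
        (∀ σ ∈ P, σ • x = x) ↔ g • x = x := by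
      intro X _ x
      refine ⟨fun h => h g hgP, fun h σ hσ => ?_⟩
      rcases hP σ hσ with rfl | rfl
      · exact one_smul _ x
      · exact h
    have ha : a * a = 1 := by
      ext1 x
      apply Subtype.ext
      change g • g • (x : Pt n) = x
      rw [smul_smul, hgg, one_smul]
    have hb : b * b = 1 := by
      ext1 x
      apply Subtype.ext
      change g • g • (x : Set (Set (Pt n))) = x
      rw [smul_smul, hgg, one_smul]
    have hca : Nat.card {x // a x = x} = Nat.card {x // x ∈ Scl n ∧ ∀ σ ∈ P, σ • x = x} := by
      refine Nat.card_congr (Equiv.trans ?_ (Equiv.subtypeSubtypeEquivSubtypeInter _ _))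
      exact Equiv.subtypeEquivRight fun x => by rw [hfixed, Subtype.ext_iff]; rfl
    have hcb : Nat.card {x // b x = x} = Nat.card {x // x ∈ F ∧ ∀ σ ∈ P, σ • x = x} := by
      refine Nat.card_congr (Equiv.trans ?_ (Equiv.subtypeSubtypeEquivSubtypeInter _ _))
      exact Equiv.subtypeEquivRight fun x => by rw [hfixed, Subtype.ext_iff]; rfl
    obtain ⟨e, he⟩ := exists_equivariant_equiv a b ha hb
      ((card_Scl n).trans (card_factorization hn hF).symm) (hca.trans (h1'.symm.trans hcb.symm))
    refine ⟨fun s => (e s : Set (Set (Pt n))), ⟨fun s _ => (e s).2, fun s _ t _ hst =>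
      e.injective (Subtype.ext hst), fun M hM => ⟨e.symm ⟨M, hM⟩, trivial, by simp⟩⟩, ?_⟩
    intro σ hσ
    rcases hP σ hσ with rfl | rfl
    · exact one_smul _ _
    · exact invariant_of_equivariant hF (fun s => (e s).2) hgg (hS σ hσ) fun s =>
        congrArg Subtype.val (he s)
end
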